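/- arXiv:1706.10200 — 2 statements merged into one kernel-verified Lean document; each statement's English description precedes it below -/
import Mathlib

section
/- Every 2-local Nash equilibrium of the 2-local degree price network creation game (deg2NCG) on n nodes whose induced graph is connected has diameter D < (2/3)·(1 + √(9n + 19)); in particular the diameter of every 2NE network is in O(√n). -/
/-!
Along a shortest path `v 0, …, v D` realising the diameter, agent `v i` may buy an edge to
`v (i + 2)` at price `deg (v (i + 2))`. This brings each of `v (i + 2), …, v D` one step closer,
so in equilibrium `deg (v j) ≥ D - j + 1` (`card_le_deg`, `deg_lower`). Walking the path in the
other direction gives `deg (v j) ≥ j + 1`.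

Every node lies in the closed neighbourhoods of at most three vertices of a shortest path, as
any two vertices whose closed neighbourhoods meet are at distance at most `2` (`sum_deg_le`).
Summing the degree bounds over `2 ≤ j ≤ D - 2` therefore gives `3 n ≥ ∑ j, (max j (D - j) + 2) ≥ 3 D ^ 2 / 4 - D - 4`
(`sum_max_lower`), which is the claim after solving for `D`. For `D ≤ 3` the right-hand side of
the claim already exceeds `4`.
-/

/-!
Degree price network creation games (degNCG / degkNCG / degAOG / degkAOG).

A strategy vector assigns to each agent `u` a finite set `st u` of nodes to
which `u` buys an edge.  The induced graph has an edge `{u,v}` iff `v ∈ st u`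
or `u ∈ st v`.  The cost of agent `u` is the sum of `deg v - 1` over all `v`
to which `u` bought an edge, plus the sum of (extended, i.e. `⊤` when
unreachable) graph distances from `u` to all nodes.
-/

/-- A strategy vector: each agent picks the set of nodes it buys edges to. -/
abbrev Strategy (V : Type) := V → Finset V

variable {V : Type} [Fintype V] [DecidableEq V]

/-- The network induced by a strategy vector: `{u,v}` is an edge iff
`v ∈ st u` or `u ∈ st v`. -/
def netG (st : Strategy V) : SimpleGraph V :=
  SimpleGraph.fromRel (fun u v => v ∈ st u)

/-- The degree of a node in the induced network. -/
noncomputable def deg (st : Strategy V) (v : V) : ℕ :=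
  letI : DecidableRel (netG st).Adj := Classical.decRel _
  (netG st).degree v

/-- The cost of agent `u`: degree-prices of the bought edges plus the sum of
the distances to all nodes (`⊤` if some node is unreachable). -/
noncomputable def cost (st : Strategy V) (u : V) : ℕ∞ :=
  ((∑ v ∈ st u, (deg st v - 1) : ℕ) : ℕ∞) + ∑ w, (netG st).edist u w

/-- A strategy vector is valid if nobody buys a self-loop and every edge has
exactly one owner. -/
def Valid (st : Strategy V) : Prop :=
  (∀ u, u ∉ st u) ∧ (∀ u v, v ∈ st u → u ∉ st v)

/-- Pure Nash equilibrium of the degNCG: no agent can strictly decrease her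
cost by unilaterally switching to any other strategy. -/
def IsNE (st : Strategy V) : Prop :=
  ∀ (u : V) (t : Finset V), u ∉ t →
    cost st u ≤ cost (Function.update st u t) u

/-- `k`-local Nash equilibrium of the degkNCG: no agent can strictly decrease
her cost by a deviation in which every newly bought edge goes to a node at
distance at most `k` in the current graph. -/
def IskNE (k : ℕ) (st : Strategy V) : Prop :=
  ∀ (u : V) (t : Finset V), u ∉ t →
    (∀ v ∈ t \ st u, (netG st).edist u v ≤ k) →
    cost st u ≤ cost (Function.update st u t) u

/-- Equilibrium of the add-only game degAOG: no agent can strictly decrease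
her cost by adding edges (deviations are supersets of the current strategy). -/
def IsAOEq (st : Strategy V) : Prop :=
  ∀ (u : V) (t : Finset V), u ∉ t → st u ⊆ t →
    cost st u ≤ cost (Function.update st u t) u

/-- Equilibrium of the `k`-local add-only game degkAOG. -/
def IskAOEq (k : ℕ) (st : Strategy V) : Prop :=
  ∀ (u : V) (t : Finset V), u ∉ t → st u ⊆ t →
    (∀ v ∈ t \ st u, (netG st).edist u v ≤ k) →
    cost st u ≤ cost (Function.update st u t) u

/-- The social cost: the sum of all agents' costs. -/
noncomputable def social (st : Strategy V) : ℕ∞ :=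
  ∑ u, cost st u

/-- The center sponsored spanning star on `n + 2` nodes: agent `0` buys an
edge to every other agent, everybody else buys nothing. -/
def starStrat (n : ℕ) : Strategy (Fin (n + 2)) := fun u =>
  if u = 0 then ({0} : Finset (Fin (n + 2)))ᶜ else ∅

lemma deg_eq_ncard (st : Strategy V) (v : V) : deg st v = ((netG st).neighborSet v).ncard := by
  classical
  unfold deg
  rw [← SimpleGraph.card_neighborSet_eq_degree, Set.ncard_eq_toFinset_card', Set.toFinset_card]

lemma netG_adj (st : Strategy V) (a b : V) :
    (netG st).Adj a b ↔ a ≠ b ∧ (b ∈ st a ∨ a ∈ st b) :=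
  SimpleGraph.fromRel_adj _ _ _

/-- The deviation in which `u` buys the additional edge `{u, v}` saves at least one unit of
distance for each node that `v` lies two steps closer to, so in equilibrium there are at most
`deg v` such nodes. -/
lemma card_le_deg (st : Strategy V) (hv : Valid st) (hne : IskNE 2 st) (hc : (netG st).Connected)
    (u v : V) (huv : (netG st).dist u v = 2) (T : Finset V)
    (hT : ∀ w ∈ T, (netG st).dist u w = (netG st).dist v w + 2) : T.card ≤ deg st v := by
  classical
  have hne_uv : u ≠ v := by rintro rfl; simp at huv
  have hnadj : ¬ (netG st).Adj u v := fun h => by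
    rw [SimpleGraph.dist_eq_one_iff_adj.2 h] at huv; omega
  have hvst : v ∉ st u := fun h => hnadj ((netG_adj _ _ _).2 ⟨hne_uv, Or.inl h⟩)
  set st' := Function.update st u (insert v (st u)) with hst'
  have hst'u : st' u = insert v (st u) := by simp [hst']
  have hst'n : ∀ a, a ≠ u → st' a = st a := fun a ha => by simp [hst', ha]
  have hadj' : ∀ a b, (netG st').Adj a b ↔
      (netG st).Adj a b ∨ (a = u ∧ b = v) ∨ (a = v ∧ b = u) := by
    intro a b
    rw [netG_adj, netG_adj]
    by_cases ha : a = u <;> by_cases hb : b = u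
    · subst ha; subst hb; simp [hne_uv]
    · subst ha; rw [hst'u, hst'n b hb, Finset.mem_insert]; grind
    · subst hb; rw [hst'u, hst'n a ha, Finset.mem_insert]; grind
    · rw [hst'n a ha, hst'n b hb]; grind
  have hle : netG st ≤ netG st' := fun a b h => (hadj' a b).2 (Or.inl h)
  have hc' : (netG st').Connected := hc.mono hle
  have hadjuv : (netG st').Adj u v := (hadj' u v).2 (Or.inr (Or.inl ⟨rfl, rfl⟩))
  have hdegv : deg st' v ≤ deg st v + 1 := by
    rw [deg_eq_ncard, deg_eq_ncard]
    refine (Set.ncard_le_ncard (t := insert u ((netG st).neighborSet v)) ?_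
      (Set.toFinite _)).trans (Set.ncard_insert_le _ _)
    intro b hb
    have := (hadj' v b).1 hb
    rw [Set.mem_insert_iff, SimpleGraph.mem_neighborSet]
    grind
  have hdegw : ∀ w ∈ st u, deg st' w ≤ deg st w := by
    intro w hw
    have hwu : w ≠ u := fun h => hv.1 u (h ▸ hw)
    have hwv : w ≠ v := fun h => hvst (h ▸ hw)
    rw [deg_eq_ncard, deg_eq_ncard]
    refine Set.ncard_le_ncard (fun b hb => ?_) (Set.toFinite _)
    have := (hadj' w b).1 hb
    rw [SimpleGraph.mem_neighborSet]
    grind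
  have hprice : ∑ w ∈ st' u, (deg st' w - 1) ≤ deg st v + ∑ w ∈ st u, (deg st w - 1) := by
    rw [hst'u, Finset.sum_insert hvst]
    refine Nat.add_le_add (by omega) (Finset.sum_le_sum fun w hw => ?_)
    have := hdegw w hw
    omega
  have hdist : ∑ w, (netG st').dist u w + T.card ≤ ∑ w, (netG st).dist u w := by
    have hTc : T.card = ∑ w : V, if w ∈ T then 1 else 0 := by simp
    rw [hTc, ← Finset.sum_add_distrib]
    refine Finset.sum_le_sum fun w _ => ?_
    split_ifs with hw
    · have h1 := hT w hw
      have h2 := hc'.dist_triangle (u := u) (v := v) (w := w)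
      have h3 := SimpleGraph.dist_eq_one_iff_adj.2 hadjuv
      have h4 := (hc.preconnected v w).dist_anti hle
      omega
    · exact (hc.preconnected u w).dist_anti hle
  have hcost : ∀ (s : Strategy V), (netG s).Connected →
      cost s u = ((∑ w ∈ s u, (deg s w - 1) + ∑ w, (netG s).dist u w : ℕ) : ℕ∞) := by
    intro s hs
    unfold cost
    push_cast
    congr 1
    exact Finset.sum_congr rfl fun w _ => ((hs.preconnected u w).coe_dist_eq_edist).symm
  have key := hne u (insert v (st u)) (by simp [hne_uv, hv.1 u]) (by
    intro w hw
    obtain rfl : w = v := by grind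
    rw [← (hc.preconnected u w).coe_dist_eq_edist, huv])
  rw [hcost _ hc, ← hst', hcost _ hc', Nat.cast_le] at key
  omega

/-- Lower bound on the degree at position `j` of a shortest path `p 0, …, p D`. -/
lemma deg_lower (st : Strategy V) (hv : Valid st) (hne : IskNE 2 st) (hc : (netG st).Connected)
    (D : ℕ) (p : ℕ → V) (hp : ∀ i j, i ≤ j → j ≤ D → (netG st).dist (p i) (p j) = j - i)
    (j : ℕ) (hj : 2 ≤ j) (hjD : j ≤ D) : D - j + 1 ≤ deg st (p j) := by
  classical
  have hcard : ((Finset.Icc j D).image p).card = D - j + 1 := by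
    rw [Finset.card_image_of_injOn, Nat.card_Icc]
    · omega
    · intro a ha b hb hab
      simp only [Finset.coe_Icc, Set.mem_Icc] at ha hb
      rcases le_total a b with h | h
      · have := hp a b h hb.2
        rw [hab, SimpleGraph.dist_self] at this
        omega
      · have := hp b a h ha.2
        rw [hab, SimpleGraph.dist_self] at this
        omega
  rw [← hcard]
  refine card_le_deg st hv hne hc (p (j - 2)) (p j) ?_ _ ?_
  · rw [hp _ _ (by omega) hjD]; omega
  · intro w hw
    obtain ⟨k, hk, rfl⟩ := Finset.mem_image.1 hw
    rw [Finset.mem_Icc] at hk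
    rw [hp _ _ (by omega) hk.2, hp _ _ hk.1 hk.2]
    omega

/-- Double counting: a node lies in at most three closed neighbourhoods of vertices of a
shortest path. -/
lemma sum_deg_le (st : Strategy V) (hc : (netG st).Connected)
    (D : ℕ) (p : ℕ → V) (hp : ∀ i j, i ≤ j → j ≤ D → (netG st).dist (p i) (p j) = j - i)
    (S : Finset ℕ) (hS : ∀ j ∈ S, j ≤ D) : ∑ j ∈ S, (deg st (p j) + 1) ≤ 3 * Fintype.card V := by
  classical
  have h1 : ∀ j ∈ S, deg st (p j) + 1 =
      (Finset.univ.filter fun x => x = p j ∨ (netG st).Adj (p j) x).card := by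
    intro j _
    rw [deg_eq_ncard, ← Set.ncard_insert_of_notMem (a := p j) (by simp), ← Set.ncard_coe_finset]
    congr 1
    ext x
    simp
  have h2 : ∀ x : V, (S.filter fun j => x = p j ∨ (netG st).Adj (p j) x).card ≤ 3 := by
    intro x
    set F := S.filter fun j => x = p j ∨ (netG st).Adj (p j) x with hF
    rcases F.eq_empty_or_nonempty with h | h
    · simp [h]
    · have hd : ∀ j ∈ F, (netG st).dist (p j) x ≤ 1 := by
        intro j hj
        rcases (Finset.mem_filter.1 hj).2 with rfl | h
        · simp
        · exact (SimpleGraph.dist_eq_one_iff_adj.2 h).le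
      have hsub : F ⊆ Finset.Icc (F.min' h) (F.min' h + 2) := by
        intro j hj
        have hle := F.min'_le j hj
        have e := hp _ _ hle (hS j (Finset.mem_filter.1 hj).1)
        have t := hc.dist_triangle (u := p (F.min' h)) (v := x) (w := p j)
        have a := hd _ (F.min'_mem h)
        have b := hd j hj
        rw [SimpleGraph.dist_comm] at b
        rw [Finset.mem_Icc]
        omega
      refine (Finset.card_le_card hsub).trans ?_
      rw [Nat.card_Icc]
      omega
  rw [Finset.sum_congr rfl h1]
  have h3 := Finset.sum_card_bipartiteAbove_eq_sum_card_bipartiteBelow (s := S)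
    (t := (Finset.univ : Finset V)) (fun j x => x = p j ∨ (netG st).Adj (p j) x)
  unfold Finset.bipartiteAbove Finset.bipartiteBelow at h3
  rw [h3]
  refine (Finset.sum_le_card_nsmul _ _ 3 fun x _ => h2 x).trans ?_
  simp [mul_comm]

/-- Inductive form of the lower bound on `∑ max j (D - j)`, in steps of two because the summand
is symmetric in `j ↦ D - j`. Here `D = E + 4`, `j = k + 2`, and the summand is
`max j (D - j) + 2`. -/
lemma sum_max_lower : ∀ E : ℕ,
    3 * (E + 4) ^ 2 ≤ 4 * ∑ k ∈ Finset.range (E + 1), max (k + 4) (E + 4 - k) + 4 * (E + 4) + 16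
  | 0 => by simp
  | 1 => by decide
  | E + 2 => by
    have ih := sum_max_lower E
    have hmid : ∑ k ∈ Finset.range (E + 1), max (k + 1 + 4) (E + 2 + 4 - (k + 1)) =
        ∑ k ∈ Finset.range (E + 1), max (k + 4) (E + 4 - k) + (E + 1) := by
      have h1 : ∑ _k ∈ Finset.range (E + 1), 1 = E + 1 := by simp
      rw [← Nat.add_left_cancel_iff.2 h1, ← Finset.sum_add_distrib]
      refine Finset.sum_congr rfl fun k hk => ?_
      rw [Finset.mem_range] at hk
      omega
    rw [show E + 2 + 1 = (E + 1 + 1) + 1 by ring, Finset.sum_range_succ, Finset.sum_range_succ',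
      hmid]
    have h0 : max (0 + 4) (E + 2 + 4 - 0) = E + 6 := by omega
    have hl : max (E + 1 + 1 + 4) (E + 2 + 4 - (E + 1 + 1)) = E + 6 := by omega
    rw [h0, hl]
    nlinarith

/-- Every 2-local Nash equilibrium of the deg2NCG on `n` nodes
whose induced graph is connected has diameter `D < (2/3) * (1 + √(9n + 19))`;
in particular the diameter of every 2NE network is in `O(√n)`. -/
theorem diam_2NE_lt (n : ℕ) (st : Strategy (Fin n)) (hv : Valid st)
    (hne : IskNE 2 st) (hc : (netG st).Connected) :
    ((netG st).diam : ℝ) < 2 / 3 * (1 + Real.sqrt (9 * n + 19)) := by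
  have hnonempty : Nonempty (Fin n) := hc.nonempty
  obtain ⟨a, b, hab⟩ := (netG st).exists_dist_eq_diam
  set D := (netG st).diam with hD
  obtain ⟨w, hw⟩ := hc.exists_walk_length_eq_dist a b
  have hlen : w.length = D := hw.trans hab
  set p : ℕ → Fin n := w.getVert with hpdef
  have hp : ∀ i j, i ≤ j → j ≤ D → (netG st).dist (p i) (p j) = j - i := by
    -- Each step along the walk has length at most one, and the total from `a` to `b` is `D`,
    -- so no segment can be shortened.
    have hup : ∀ i k, (netG st).dist (p i) (p (i + k)) ≤ k := by
      intro i k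
      induction k with
      | zero => simp
      | succ k ih =>
        refine (hc.dist_triangle (v := p (i + k))).trans (Nat.add_le_add ih ?_)
        by_cases h : i + k < w.length
        · exact (SimpleGraph.dist_eq_one_iff_adj.2 (w.adj_getVert_succ h)).le
        · rw [hpdef, w.getVert_of_length_le (by omega), w.getVert_of_length_le (by omega)]
          simp
    intro i j hij hj
    have h1 := hup 0 i
    have h2 := hup i (j - i)
    have h3 := hup j (D - j)
    rw [Nat.zero_add] at h1
    rw [Nat.add_sub_cancel' hij] at h2
    rw [Nat.add_sub_cancel' hj] at h3
    have ha : p 0 = a := w.getVert_zero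
    have hb : p D = b := by rw [hpdef, ← hlen, w.getVert_length]
    have t1 := hc.dist_triangle (u := p 0) (v := p i) (w := p D)
    have t2 := hc.dist_triangle (u := p i) (v := p j) (w := p D)
    rw [ha, hb, hab] at t1
    rw [ha] at h1
    rw [hb] at t2 h3
    omega
  have hn : 1 ≤ n := Fin.pos a
  suffices h : (3 / 2 * (D : ℝ) - 1) < Real.sqrt (9 * n + 19) by linarith
  apply Real.lt_sqrt_of_sq_lt
  rcases lt_or_ge D 4 with hlt | hge
  · have hn' : (1 : ℝ) ≤ n := by exact_mod_cast hn
    have hD3 : (D : ℝ) ≤ 3 := by exact_mod_cast (by omega : D ≤ 3)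
    have hD0 : (0 : ℝ) ≤ D := Nat.cast_nonneg _
    nlinarith
  · obtain ⟨E, hE⟩ : ∃ E, D = E + 4 := ⟨D - 4, by omega⟩
    have hdeg : ∀ j, 2 ≤ j → j ≤ D - 2 → max j (D - j) + 1 ≤ deg st (p j) := by
      intro j h2 hj
      have h1 := deg_lower st hv hne hc D p hp j h2 (by omega)
      have hrev := deg_lower st hv hne hc D (fun i => p (D - i)) (by
        intro i k hik hk
        rw [SimpleGraph.dist_comm, hp _ _ (by omega) (by omega)]
        omega) (D - j) (by omega) (by omega)
      rw [show D - (D - j) = j by omega] at hrev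
      omega
    have hsum := sum_deg_le st hc D p hp ((Finset.range (E + 1)).image (· + 2)) (by
      intro j hj
      obtain ⟨k, hk, rfl⟩ := Finset.mem_image.1 hj
      rw [Finset.mem_range] at hk
      omega)
    rw [Finset.sum_image (fun x _ y _ h => by simpa using h), Fintype.card_fin] at hsum
    have hmax : ∑ k ∈ Finset.range (E + 1), max (k + 4) (E + 4 - k) ≤
        ∑ k ∈ Finset.range (E + 1), (deg st (p (k + 2)) + 1) := by
      refine Finset.sum_le_sum fun k hk => ?_
      rw [Finset.mem_range] at hk
      have := hdeg (k + 2) (by omega) (by omega)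
      omega
    have hfin : 3 * D ^ 2 ≤ 12 * n + 4 * D + 16 := by
      have := sum_max_lower E
      rw [hE]
      omega
    have hfin' : 3 * (D : ℝ) ^ 2 ≤ 12 * n + 4 * D + 16 := by exact_mod_cast hfin
    nlinarith
end

section
/- The degkNCG has no finite improvement property for any k ≥ 2: there exist a finite agent set V and a cyclic sequence of strategy vectors s⁰, s¹, …, s⁵, s⁶ = s⁰ on V such that for each i ∈ {0,…,5}, s^{i+1} is obtained from s^i by a single agent changing her strategy, this change strictly decreases that agent's cost, and every newly bought edge goes to a node at distance at most 2 from the agent in G(s^i). Consequently, neither the degNCG nor the degkNCG for any k ≥ 2 admits a generalized ordinal potential function, i.e. there is no function Φ from strategy vectors to the reals such that Φ(s') < Φ(s) whenever s' arises from s by a unilateral strategy change that strictly decreases the deviating agent's cost. -/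
variable {V : Type} [Fintype V] [DecidableEq V]

section Certificates

/-- Decidable form of adjacency in `netG st`. -/
def Linked (st : Strategy V) (v w : V) : Prop :=
  v ≠ w ∧ (w ∈ st v ∨ v ∈ st w)

instance (st : Strategy V) : DecidableRel (Linked st) :=
  fun _ _ => inferInstanceAs (Decidable (_ ∧ _))

theorem netG_adj_s15 {W : Type} (st : Strategy W) (v w : W) : (netG st).Adj v w ↔ Linked st v w :=
  SimpleGraph.fromRel_adj _ v w

/-- Certificate that `d` is the distance from `u` in `netG st`. -/
def IsDist (st : Strategy V) (u : V) (d : V → ℕ) : Prop :=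
  d u = 0 ∧ (∀ v w, Linked st v w → d w ≤ d v + 1) ∧
    ∀ w, w ≠ u → ∃ v, Linked st v w ∧ d v + 1 = d w

instance (st : Strategy V) (u : V) (d : V → ℕ) : Decidable (IsDist st u d) :=
  inferInstanceAs (Decidable (_ ∧ _ ∧ _))

theorem edist_eq_of_isDist {W : Type} {st : Strategy W} {u : W} {d : W → ℕ}
    (h : IsDist st u d) (w : W) :
    (netG st).edist u w = d w := by
  obtain ⟨h0, h1, h2⟩ := h
  apply le_antisymm
  · have key : ∀ n w, d w = n → (netG st).edist u w ≤ n := by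
      intro n
      induction n with
      | zero =>
        intro w hw
        rcases eq_or_ne w u with rfl | hne
        · simp
        · obtain ⟨v, -, hv⟩ := h2 w hne
          omega
      | succ n ih =>
        intro w hw
        obtain ⟨v, hvw, hv⟩ := h2 w (by rintro rfl; omega)
        calc (netG st).edist u w
            ≤ (netG st).edist u v + (netG st).edist v w := SimpleGraph.edist_triangle
          _ ≤ n + 1 := add_le_add (ih v (by omega))
              (SimpleGraph.edist_eq_one_iff_adj.mpr ((netG_adj_s15 st v w).mpr hvw)).le
          _ = ((n + 1 : ℕ) : ℕ∞) := by push_cast; rfl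
    exact key _ w rfl
  · have key : ∀ {a b : W} (p : (netG st).Walk a b), d b ≤ d a + p.length := by
      intro a b p
      induction p with
      | nil => simp
      | cons hadj p ih =>
        have := h1 _ _ ((netG_adj_s15 st _ _).mp hadj)
        rw [SimpleGraph.Walk.length_cons]
        omega
    refine le_iInf fun p => ?_
    have := key p
    rw [h0, zero_add] at this
    exact_mod_cast this

theorem deg_eq (st : Strategy V) (v : V) :
    deg st v = (Finset.univ.filter (Linked st v)).card := by
  unfold deg
  rw [← SimpleGraph.card_neighborFinset_eq_degree]
  congr 1
  ext w
  simp [netG_adj_s15]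

/-- The cost of `u` as a natural number, given the distances `d` from `u`. -/
def certCost (st : Strategy V) (u : V) (d : V → ℕ) : ℕ :=
  ∑ v ∈ st u, ((Finset.univ.filter (Linked st v)).card - 1) + ∑ w, d w

theorem cost_eq_of_isDist {st : Strategy V} {u : V} {d : V → ℕ} (h : IsDist st u d) :
    cost st u = certCost st u d := by
  unfold cost certCost
  simp only [edist_eq_of_isDist h, deg_eq]
  push_cast
  rfl

/-- Distance certificates before and after a move reduce its `2`-locality and the decrease in cost
to arithmetic in `ℕ`. -/
theorem step_of_isDist {st st' : Strategy V} {u : V} {t : Finset V} {d d' : V → ℕ}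
    (h : IsDist st u d) (h' : IsDist st' u d')
    (hloc : ∀ v ∈ t \ st u, d v ≤ 2) (hlt : certCost st' u d' < certCost st u d) :
    (∀ v ∈ t \ st u, (netG st).edist u v ≤ 2) ∧ cost st' u < cost st u := by
  constructor
  · intro v hv
    rw [edist_eq_of_isDist h]
    exact_mod_cast hloc v hv
  · rw [cost_eq_of_isDist h, cost_eq_of_isDist h']
    exact_mod_cast hlt

end Certificates

section Cycle

/-- The strategy vector in which agents `0, 1, 2` play `a, b, c` and the others their fixed
strategies. -/
def profile (a b c : Finset (Fin 10)) : Strategy (Fin 10) :=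
  ![a, b, c, {2}, {3}, {1, 7, 8}, {4, 9}, ∅, ∅, ∅]

/-- The improvement cycle. -/
def cyc : Fin 7 → Strategy (Fin 10) :=
  ![profile {4, 9} {6, 7} {6},
    profile {6} {6, 7} {6},
    profile {6} {4, 9} {6},
    profile {4, 9} {4, 9} {6},
    profile {4, 9} {4, 9} {4, 9},
    profile {4, 9} {6, 7} {4, 9},
    profile {4, 9} {6, 7} {6}]

/-- The agent moving in each step. -/
def mover : Fin 6 → Fin 10 := ![0, 1, 0, 2, 1, 2]

/-- The distances from the mover before each step. -/
def distBefore : Fin 6 → Fin 10 → ℕ :=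
  ![![0, 3, 3, 2, 1, 4, 2, 4, 5, 1],
    ![2, 0, 2, 3, 2, 1, 1, 1, 2, 2],
    ![0, 3, 2, 3, 2, 4, 1, 5, 5, 2],
    ![3, 3, 0, 1, 2, 4, 1, 5, 5, 2],
    ![2, 0, 2, 2, 1, 1, 2, 2, 2, 1],
    ![2, 3, 0, 1, 1, 4, 2, 4, 5, 1]]

/-- The distances from the mover after each step. -/
def distAfter : Fin 6 → Fin 10 → ℕ :=
  ![![0, 2, 2, 3, 2, 3, 1, 3, 4, 2],
    ![3, 0, 3, 2, 1, 1, 2, 2, 2, 1],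
    ![0, 2, 3, 2, 1, 3, 2, 4, 4, 1],
    ![2, 2, 0, 1, 1, 3, 2, 4, 4, 1],
    ![3, 0, 3, 3, 2, 1, 1, 1, 2, 2],
    ![3, 2, 0, 1, 2, 3, 1, 3, 4, 2]]

theorem cyc_valid : ∀ i, Valid (cyc i) := by
  unfold Valid
  decide +kernel

theorem cycle_check : ∀ i : Fin 6,
    mover i ∉ cyc i.succ (mover i) ∧
    cyc i.succ = Function.update (cyc i.castSucc) (mover i) (cyc i.succ (mover i)) ∧
    IsDist (cyc i.castSucc) (mover i) (distBefore i) ∧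
    IsDist (cyc i.succ) (mover i) (distAfter i) ∧
    (∀ v ∈ cyc i.succ (mover i) \ cyc i.castSucc (mover i), distBefore i v ≤ 2) ∧
    certCost (cyc i.succ) (mover i) (distAfter i) <
      certCost (cyc i.castSucc) (mover i) (distBefore i) := by
  decide +kernel

theorem cyc_step (i : Fin 6) : ∃ (u : Fin 10) (t : Finset (Fin 10)),
    u ∉ t ∧
    cyc i.succ = Function.update (cyc i.castSucc) u t ∧
    (∀ v ∈ t \ cyc i.castSucc u, (netG (cyc i.castSucc)).edist u v ≤ 2) ∧
    cost (cyc i.succ) u < cost (cyc i.castSucc) u := by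
  obtain ⟨hu, hupd, hd, hd', hloc, hlt⟩ := cycle_check i
  exact ⟨_, _, hu, hupd, step_of_isDist hd hd' hloc hlt⟩

theorem not_strictly_decreasing_cyc (Φ : Strategy (Fin 10) → ℝ) :
    ¬ ∀ i : Fin 6, Φ (cyc i.succ) < Φ (cyc i.castSucc) := by
  intro h
  have hanti : StrictAnti fun i => Φ (cyc i) := Fin.strictAnti_iff_succ_lt.mpr h
  have hlt : Φ (cyc 6) < Φ (cyc 0) := hanti (by decide)
  exact lt_irrefl _ hlt

end Cycle

/-- The degkNCG has no finite improvement property for any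
`k ≥ 2`: there is a finite agent set and a cyclic sequence
`s⁰, s¹, …, s⁵, s⁶ = s⁰` of strategy vectors in which each step is a single
agent's unilateral, strictly cost-decreasing strategy change whose newly
bought edges all go to nodes at distance at most 2 in the current graph.
Consequently there is no generalized ordinal potential function, neither for
the degNCG (arbitrary improving deviations) nor for the degkNCG for any
`k ≥ 2` (k-local improving deviations). -/
theorem no_FIP :
    ∃ (N : ℕ) (s : Fin 7 → Strategy (Fin N)),
      (∀ i, Valid (s i)) ∧
      s 6 = s 0 ∧
      (∀ i : Fin 6, ∃ (u : Fin N) (t : Finset (Fin N)),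
        u ∉ t ∧
        s i.succ = Function.update (s i.castSucc) u t ∧
        (∀ v ∈ t \ s i.castSucc u, (netG (s i.castSucc)).edist u v ≤ 2) ∧
        cost (s i.succ) u < cost (s i.castSucc) u) ∧
      (¬ ∃ Φ : Strategy (Fin N) → ℝ,
        ∀ (σ : Strategy (Fin N)) (u : Fin N) (t : Finset (Fin N)), u ∉ t →
          cost (Function.update σ u t) u < cost σ u →
          Φ (Function.update σ u t) < Φ σ) ∧
      (∀ k : ℕ, 2 ≤ k →
        ¬ ∃ Φ : Strategy (Fin N) → ℝ,
          ∀ (σ : Strategy (Fin N)) (u : Fin N) (t : Finset (Fin N)), u ∉ t →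
            (∀ v ∈ t \ σ u, (netG σ).edist u v ≤ k) →
            cost (Function.update σ u t) u < cost σ u →
            Φ (Function.update σ u t) < Φ σ) := by
  refine ⟨10, cyc, cyc_valid, rfl, cyc_step, ?_, ?_⟩
  · rintro ⟨Φ, hΦ⟩
    refine not_strictly_decreasing_cyc Φ fun i => ?_
    obtain ⟨u, t, hu, hupd, -, hlt⟩ := cyc_step i
    rw [hupd] at hlt ⊢
    exact hΦ _ u t hu hlt
  · rintro k hk ⟨Φ, hΦ⟩
    refine not_strictly_decreasing_cyc Φ fun i => ?_
    obtain ⟨u, t, hu, hupd, hloc, hlt⟩ := cyc_step i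
    rw [hupd] at hlt ⊢
    exact hΦ _ u t hu (fun v hv => (hloc v hv).trans (by exact_mod_cast hk)) hlt
end
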